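/- Let A be a ring, L a left A-module, N ⊆ L a submodule, and W ⊆ L/N a submodule with quotient W′ = (L/N)/W. If Ext¹_A(W,N) = 0, then L has a submodule W̃ isomorphic to W such that the quotient L/W̃ contains a submodule isomorphic to N whose quotient is isomorphic to W′; in other words, there are short exact sequences 0 → W̃ → L → N″ → 0 and 0 → N → N″ → W′ → 0. (Moving Lemma: a subquotient W sitting above N in a filtration of L can be moved below N when Ext¹_A(W,N) vanishes.) -/

import Mathlib

open CategoryTheory Opposite

noncomputable section

/-- `Ext¹` of left `A`-modules (as a `ℤ`-module). -/
def Ext1 (A : Type) [Ring A] (M N : Type) [AddCommGroup M] [Module A M]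
    [AddCommGroup N] [Module A N] : ModuleCat ℤ :=
  ((Ext ℤ (ModuleCat A) 1).obj (op (ModuleCat.of A M))).obj (ModuleCat.of A N)

/-!
Vanishing of `Ext¹(W, N)` lifts the inclusion `W ⊆ L/N` to a map `s : W → L`. Its image `W̃` is
disjoint from `N` and maps onto `W`. These two conditions are all that is needed: disjointness makes
`W̃ ≃ W` and makes `N` embed into `L/W̃`, while both iterated quotients are `L/(N ⊔ W̃)`.
-/

section Ext

variable {R C : Type*} [Ring R] [Category* C] [Abelian C] [Linear R C] [EnoughProjectives C]

theorem exists_d_comp_eq_of_isZero_ext {Z Y : C} (P : ProjectiveResolution Z) {n : ℕ}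
    (hext : Limits.IsZero (((Ext R C (n + 1)).obj (op Z)).obj Y)) (φ : P.complex.X (n + 1) ⟶ Y)
    (hφ : P.complex.d (n + 2) (n + 1) ≫ φ = 0) :
    ∃ ψ : P.complex.X n ⟶ Y, P.complex.d (n + 1) n ≫ ψ = φ := by
  have hzero : Limits.IsZero ((P.complex.linearYonedaObj R Y).homology (n + 1)) :=
    hext.of_iso (P.isoExt (n + 1) Y).symm
  rw [← HomologicalComplex.exactAt_iff_isZero_homology,
    HomologicalComplex.exactAt_iff' _ n (n + 1) (n + 2) (by simp) (by simp),
    ShortComplex.moduleCat_exact_iff] at hzero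
  exact hzero φ hφ

theorem exists_lift_of_isZero_ext_one {S : ShortComplex C} (hS : S.ShortExact) {Z : C}
    (i : Z ⟶ S.X₃) (hext : Limits.IsZero (((Ext R C 1).obj (op Z)).obj S.X₁)) :
    ∃ s : Z ⟶ S.X₂, s ≫ S.g = i := by
  have := hS.mono_f
  have := hS.epi_g
  let P := ProjectiveResolution.of Z
  let p : P.complex.X 0 ⟶ Z := P.π.f 0
  have : Epi p := inferInstanceAs (Epi (P.π.f 0))
  have hdp : P.complex.d 1 0 ≫ p = 0 := P.complex_d_comp_π_f_zero
  let a : P.complex.X 0 ⟶ S.X₂ := Projective.factorThru (p ≫ i) S.g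
  have ha : a ≫ S.g = p ≫ i := Projective.factorThru_comp _ _
  -- `d ≫ a` factors through `S.X₁` as a cocycle; a primitive `ψ` of it corrects `a` to a
  -- morphism that descends to `Z`.
  obtain ⟨φ, hφ⟩ : ∃ φ, φ ≫ S.f = P.complex.d 1 0 ≫ a := by
    have hda : (P.complex.d 1 0 ≫ a) ≫ S.g = 0 := by
      rw [Category.assoc, ha, reassoc_of% hdp, Limits.zero_comp]
    exact ⟨hS.exact.lift _ hda, hS.exact.lift_f _ hda⟩
  have hφ_cocycle : P.complex.d 2 1 ≫ φ = 0 := by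
    rw [← cancel_mono S.f, Category.assoc, hφ, P.complex.d_comp_d_assoc, Limits.zero_comp,
      Limits.zero_comp]
  obtain ⟨ψ, hψ⟩ := exists_d_comp_eq_of_isZero_ext P hext φ hφ_cocycle
  obtain ⟨s, hs⟩ : ∃ s : Z ⟶ S.X₂, p ≫ s = a - ψ ≫ S.f := by
    have hd : P.complex.d 1 0 ≫ (a - ψ ≫ S.f) = 0 := by
      rw [Preadditive.comp_sub, reassoc_of% hψ, hφ, sub_self]
    exact ⟨P.exact₀.desc _ hd, P.exact₀.g_desc _ hd⟩
  refine ⟨s, ?_⟩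
  rw [← cancel_epi p, reassoc_of% hs, Preadditive.sub_comp, Category.assoc, S.zero,
    Limits.comp_zero, sub_zero, ha]

end Ext

section Submodule

universe u v

variable {A : Type u} [Ring A]

section Disjoint

variable {M M' : Type*} [AddCommGroup M] [Module A M] [AddCommGroup M'] [Module A M']

/-- A linear map identifies a submodule disjoint from its kernel with the image of that
submodule. -/
def equivMapOfDisjointKer (f : M →ₗ[A] M') {p : Submodule A M} (h : Disjoint p f.ker) :
    p ≃ₗ[A] p.map f :=
  LinearEquiv.ofInjective (f.domRestrict p) (LinearMap.injective_domRestrict_iff.2 h) ≪≫ₗ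
    LinearEquiv.ofEq _ _ (LinearMap.range_domRestrict p f)

/-- Dividing a module by two submodules in either order gives the same iterated quotient. -/
def quotientQuotientMapMkQComm (p q : Submodule A M) :
    ((M ⧸ p) ⧸ q.map p.mkQ) ≃ₗ[A] ((M ⧸ q) ⧸ p.map q.mkQ) :=
  Submodule.quotientQuotientEquivQuotientSup p q ≪≫ₗ
    Submodule.quotEquivOfEq _ _ (sup_comm p q) ≪≫ₗ
    (Submodule.quotientQuotientEquivQuotientSup q p).symm

theorem disjoint_range_ker_of_injective_comp {M'' : Type*} [AddCommGroup M''] [Module A M'']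
    {f : M →ₗ[A] M'} {s : M'' →ₗ[A] M} (h : Function.Injective (f ∘ₗ s)) :
    Disjoint s.range f.ker := by
  rw [LinearMap.disjoint_ker]
  rintro _ ⟨x, rfl⟩ hx
  rw [(map_eq_zero_iff (f ∘ₗ s) h).1 hx, map_zero]

end Disjoint

variable {L : Type v} [AddCommGroup L] [Module A L] (N : Submodule A L) (W : Submodule A (L ⧸ N))

theorem exists_mkQ_comp_eq_subtype_of_subsingleton_ext [Small.{v} A]
    (hext : Subsingleton
      (((Ext ℤ (ModuleCat.{v} A) 1).obj (op (ModuleCat.of A W))).obj (ModuleCat.of A N))) :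
    ∃ s : W →ₗ[A] L, N.mkQ ∘ₗ s = W.subtype := by
  have hexact := LinearMap.exact_subtype_mkQ N
  have hS : (ModuleCat.shortComplexOfCompEqZero N.subtype N.mkQ
      hexact.linearMap_comp_eq_zero).ShortExact :=
    ModuleCat.shortComplex_shortExact _ hexact N.injective_subtype N.mkQ_surjective
  obtain ⟨s, hs⟩ := exists_lift_of_isZero_ext_one (R := ℤ) hS (ModuleCat.ofHom W.subtype)
    (ModuleCat.isZero_of_subsingleton _)
  exact ⟨s.hom, congrArg ModuleCat.Hom.hom hs⟩

theorem exists_disjoint_map_mkQ_eq_of_subsingleton_ext [Small.{v} A]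
    (hext : Subsingleton
      (((Ext ℤ (ModuleCat.{v} A) 1).obj (op (ModuleCat.of A W))).obj (ModuleCat.of A N))) :
    ∃ Wt : Submodule A L, Disjoint Wt N ∧ Wt.map N.mkQ = W := by
  obtain ⟨s, hs⟩ := exists_mkQ_comp_eq_subtype_of_subsingleton_ext N W hext
  refine ⟨s.range, ?_, by rw [← LinearMap.range_comp, hs, W.range_subtype]⟩
  simpa only [N.ker_mkQ] using
    disjoint_range_ker_of_injective_comp (f := N.mkQ) (hs ▸ W.injective_subtype)

theorem moving_lemma_general [Small.{v} A]
    (hext : Subsingleton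
      (((Ext ℤ (ModuleCat.{v} A) 1).obj (op (ModuleCat.of A W))).obj (ModuleCat.of A N))) :
    ∃ Wt : Submodule A L, Nonempty (Wt ≃ₗ[A] W) ∧
      ∃ Nsub : Submodule A (L ⧸ Wt), Nonempty (Nsub ≃ₗ[A] N) ∧
        Nonempty (((L ⧸ Wt) ⧸ Nsub) ≃ₗ[A] ((L ⧸ N) ⧸ W)) := by
  obtain ⟨Wt, hdisj, rfl⟩ := exists_disjoint_map_mkQ_eq_of_subsingleton_ext N W hext
  have hWt : Disjoint Wt N.mkQ.ker := by rwa [N.ker_mkQ]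
  have hN : Disjoint N Wt.mkQ.ker := by rw [Wt.ker_mkQ]; exact hdisj.symm
  exact ⟨Wt, ⟨equivMapOfDisjointKer N.mkQ hWt⟩, N.map Wt.mkQ,
    ⟨(equivMapOfDisjointKer Wt.mkQ hN).symm⟩, ⟨quotientQuotientMapMkQComm Wt N⟩⟩

end Submodule

/-- Moving Lemma: if `N ⊆ L` and `W ⊆ L/N` with `Ext¹(W,N) = 0`,
then `W` can be moved below `N`: there is a submodule `W̃ ⊆ L` isomorphic to `W` with
`L/W̃` an extension of `W′ = (L/N)/W` by `N`. -/
theorem moving_lemma (A : Type) [Ring A] (L : Type) [AddCommGroup L] [Module A L]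
    (N : Submodule A L) (W : Submodule A (L ⧸ N))
    (hext : Subsingleton (Ext1 A ↥W ↥N)) :
    ∃ Wt : Submodule A L, Nonempty (↥Wt ≃ₗ[A] ↥W) ∧
      ∃ Nsub : Submodule A (L ⧸ Wt), Nonempty (↥Nsub ≃ₗ[A] ↥N) ∧
        Nonempty (((L ⧸ Wt) ⧸ Nsub) ≃ₗ[A] ((L ⧸ N) ⧸ W)) :=
  moving_lemma_general N W hext

end
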